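/- (Consistency condition for the constrained Hodge dual ansatz.) Let D ≥ 1 and let g : Matrix (Fin D) (Fin D) ℝ be symmetric and invertible with inverse g⁻¹. Then for every V : Fin D → ℝ: det g · ∑_{j : Fin D} ∑_{r : Fin D} ∑_{a : Fin (D−1) → Fin D} ∑_{b : Fin (D−1) → Fin D} ε(j ::ᵥ a) · ε(r ::ᵥ b) · V j · V r · ∏_{m : Fin (D−1)} g⁻¹ (a m) (b m) = (D−1)! · (∑_{j, r : Fin D} g j r · V j · V r). Consequently, the double-dual consistency requirement on the projection vector V in the constrained Hodge dual ansatz is exactly the normalization g_{jr} V_j V_r = 1. -/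

import Mathlib

/-- Levi-Civita symbol: the determinant of the `D × D` matrix whose `(a,b)` entry is
`1` if `i a = b` and `0` otherwise. -/
def eps (R : Type*) [CommRing R] {D : ℕ} (i : Fin D → Fin D) : R :=
  Matrix.det (Matrix.of fun a b => if i a = b then (1 : R) else 0)

theorem eps_eq_detRowAlternating (R : Type*) [CommRing R] {D : ℕ} (i : Fin D → Fin D) :
    eps R i = Matrix.detRowAlternating (fun m => (Pi.single (i m) 1 : Fin D → R)) := by
  unfold eps
  congr 1
  ext a b
  simp [Pi.single_apply, eq_comm]

theorem eps_eq_zero_of_not_injective {R : Type*} [CommRing R] {D : ℕ} {i : Fin D → Fin D}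
    (hi : ¬ Function.Injective i) : eps R i = 0 := by
  simp only [Function.Injective, not_forall] at hi
  obtain ⟨a, b, hab, hne⟩ := hi
  exact Matrix.det_zero_of_row_eq hne (by ext c; simp [hab])

theorem eps_mul_self_of_injective {R : Type*} [CommRing R] {D : ℕ} {i : Fin D → Fin D}
    (hi : Function.Injective i) : eps R i * eps R i = 1 := by
  let σ : Equiv.Perm (Fin D) := Equiv.ofBijective i (Finite.injective_iff_bijective.mp hi)
  have h : eps R i = ((Equiv.Perm.sign σ : ℤ) : R) := by
    rw [← Matrix.det_permutation]
    unfold eps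
    congr 1
    ext a b
    simp [PEquiv.toMatrix_apply, σ, eq_comm]
  rw [h, ← Int.cast_mul, ← Units.val_mul, Int.units_mul_self]
  simp

theorem vecCons_injective_iff {α : Type*} {D : ℕ} {j : α} {a : Fin D → α} :
    Function.Injective (Matrix.vecCons j a) ↔ j ∉ Set.range a ∧ Function.Injective a :=
  Fin.cons_injective_iff

/-- The number of tuples completing `j` to a permutation. -/
theorem card_vecCons_injective (D : ℕ) (j : Fin (D + 1)) :
    Fintype.card {a : Fin D → Fin (D + 1) // Function.Injective (Matrix.vecCons j a)}
      = D.factorial := by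
  let e : {a : Fin D → Fin (D + 1) // Function.Injective (Matrix.vecCons j a)}
      ≃ (Fin D ↪ {x : Fin (D + 1) // x ≠ j}) :=
    { toFun := fun a => ⟨fun m => ⟨a.1 m, fun h => (vecCons_injective_iff.mp a.2).1 ⟨m, h⟩⟩,
        fun m n h => (vecCons_injective_iff.mp a.2).2 (congrArg Subtype.val h)⟩
      invFun := fun f => ⟨fun m => (f m).1, vecCons_injective_iff.mpr
        ⟨fun ⟨m, h⟩ => (f m).2 h, fun m n h => f.injective (Subtype.ext h)⟩⟩
      left_inv := fun a => rfl
      right_inv := fun f => rfl }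
  rw [Fintype.card_congr e, Fintype.card_embedding_eq]
  simp [Nat.descFactorial_self]

theorem sum_eps_mul_eps (R : Type*) [CommRing R] {D : ℕ} (j k : Fin (D + 1)) :
    ∑ a : Fin D → Fin (D + 1), eps R (Matrix.vecCons j a) * eps R (Matrix.vecCons k a)
      = if j = k then (D.factorial : R) else 0 := by
  classical
  split_ifs with hjk
  · subst hjk
    have h (a : Fin D → Fin (D + 1)) : eps R (Matrix.vecCons j a) * eps R (Matrix.vecCons j a)
        = if Function.Injective (Matrix.vecCons j a) then 1 else 0 := by
      split_ifs with ha
      · exact eps_mul_self_of_injective ha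
      · rw [eps_eq_zero_of_not_injective ha, zero_mul]
    simp_rw [h]
    rw [Finset.sum_boole, ← card_vecCons_injective D j, Fintype.card_subtype]
  · refine Finset.sum_eq_zero fun a _ => ?_
    by_cases ha : Function.Injective (Matrix.vecCons j a)
    · have hk : k ∈ Set.range a := by
        obtain ⟨m, hm⟩ := (Finite.injective_iff_surjective.mp ha) k
        induction m using Fin.cases with
        | zero => exact absurd hm hjk
        | succ m => exact ⟨m, hm⟩
      rw [eps_eq_zero_of_not_injective fun h => (vecCons_injective_iff.mp h).1 hk, mul_zero]
    · rw [eps_eq_zero_of_not_injective ha, zero_mul]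

theorem single_comp_vecCons {R : Type*} [CommRing R] {D : ℕ} (k : Fin (D + 1))
    (a : Fin D → Fin (D + 1)) :
    (fun m => (Pi.single (Matrix.vecCons k a m) 1 : Fin (D + 1) → R))
      = Matrix.vecCons (Pi.single k 1) (fun m => Pi.single (a m) 1) := by
  ext m
  induction m using Fin.cases <;> rfl

/-- Expansion of a determinant along a first row `v`, the other rows being basis vectors. -/
theorem det_vecCons_single {R : Type*} [CommRing R] {D : ℕ} (v : Fin (D + 1) → R)
    (a : Fin D → Fin (D + 1)) :
    Matrix.det (Matrix.of (Matrix.vecCons v fun m => Pi.single (a m) 1))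
      = ∑ k, v k * eps R (Matrix.vecCons k a) := by
  simp_rw [eps_eq_detRowAlternating, single_comp_vecCons]
  let f := (Matrix.detRowAlternating (n := Fin (D + 1)) (R := R)).toMultilinearMap.curryLeft
  change f v (fun m => Pi.single (a m) 1) =
    ∑ k, v k * f (Pi.single k 1) (fun m => Pi.single (a m) 1)
  conv_lhs => rw [pi_eq_sum_univ' v]
  simp [map_sum]

/-- Expansion of a determinant whose first row is a basis vector along all its other rows. -/
theorem det_vecCons_single_left {R : Type*} [CommRing R] {D : ℕ} (r : Fin (D + 1))
    (w : Fin D → Fin (D + 1) → R) :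
    Matrix.det (Matrix.of (Matrix.vecCons (Pi.single r 1) w))
      = ∑ b : Fin D → Fin (D + 1), eps R (Matrix.vecCons r b) * ∏ m, w m (b m) := by
  simp_rw [eps_eq_detRowAlternating, single_comp_vecCons]
  let f := (Matrix.detRowAlternating (n := Fin (D + 1)) (R := R)).toMultilinearMap.curryLeft
    (Pi.single r 1)
  change f w = ∑ b : Fin D → Fin (D + 1), f (fun m => Pi.single (b m) 1) * ∏ m, w m (b m)
  have hw : w = fun m => ∑ k, w m k • (Pi.single k 1 : Fin (D + 1) → R) := by
    funext m
    exact pi_eq_sum_univ' (w m)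
  conv_lhs => rw [hw]
  rw [MultilinearMap.map_sum]
  refine Finset.sum_congr rfl fun b _ => ?_
  rw [MultilinearMap.map_smul_univ, smul_eq_mul, mul_comm]

/-- Contracting a Levi-Civita symbol with rows of the inverse metric. -/
theorem det_mul_sum_eps_mul_prod_inv {R : Type*} [CommRing R] {D : ℕ}
    (g : Matrix (Fin (D + 1)) (Fin (D + 1)) R) (hg : IsUnit g.det) (r : Fin (D + 1))
    (a : Fin D → Fin (D + 1)) :
    g.det * ∑ b : Fin D → Fin (D + 1), eps R (Matrix.vecCons r b) * ∏ m, g⁻¹ (a m) (b m)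
      = ∑ k, g r k * eps R (Matrix.vecCons k a) := by
  rw [← det_vecCons_single_left r fun m => g⁻¹ (a m), ← det_vecCons_single (g r) a, mul_comm,
    ← Matrix.det_mul]
  congr 1
  have h : Matrix.of (Matrix.vecCons (Pi.single r 1) fun m => g⁻¹ (a m))
      = Matrix.of (Matrix.vecCons (g r) fun m => Pi.single (a m) 1) * g⁻¹ := by
    ext i l
    induction i using Fin.cases with
    | zero =>
      have := congrFun (congrFun (Matrix.mul_nonsing_inv g hg) r) l
      simpa [Matrix.mul_apply, Matrix.one_apply, Pi.single_apply, eq_comm] using this.symm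
    | succ i => simp [Matrix.mul_apply, Pi.single_apply]
  rw [h, Matrix.mul_assoc, Matrix.nonsing_inv_mul g hg, Matrix.mul_one]

/-- Consistency condition for the constrained Hodge dual ansatz: for a symmetric
invertible metric `g` in dimension `D + 1 ≥ 1` and any vector `V`, the double-dual
contraction reduces to `(D)! · g_{jr} V_j V_r`, so the consistency requirement is
exactly the normalization `g_{jr} V_j V_r = 1`. -/
theorem constrained_hodge_consistency (D : ℕ)
    (g : Matrix (Fin (D + 1)) (Fin (D + 1)) ℝ)
    (hsymm : g.IsSymm) (hg : IsUnit g.det) (V : Fin (D + 1) → ℝ) :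
    g.det * ∑ j : Fin (D + 1), ∑ r : Fin (D + 1),
        ∑ a : Fin D → Fin (D + 1), ∑ b : Fin D → Fin (D + 1),
          eps ℝ (Matrix.vecCons j a) * eps ℝ (Matrix.vecCons r b) * V j * V r
            * ∏ m : Fin D, g⁻¹ (a m) (b m)
      = (D.factorial : ℝ) * ∑ j : Fin (D + 1), ∑ r : Fin (D + 1), g j r * V j * V r := by
  have h (j r : Fin (D + 1)) :
      g.det * ∑ a : Fin D → Fin (D + 1), ∑ b : Fin D → Fin (D + 1),
          eps ℝ (Matrix.vecCons j a) * eps ℝ (Matrix.vecCons r b) * V j * V r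
            * ∏ m : Fin D, g⁻¹ (a m) (b m)
        = D.factorial * (g j r * V j * V r) := by
    calc
      _ = V j * V r * ∑ a : Fin D → Fin (D + 1), eps ℝ (Matrix.vecCons j a) *
            (g.det * ∑ b : Fin D → Fin (D + 1),
              eps ℝ (Matrix.vecCons r b) * ∏ m, g⁻¹ (a m) (b m)) := by
        simp_rw [Finset.mul_sum]
        exact Finset.sum_congr rfl fun a _ => Finset.sum_congr rfl fun b _ => by ring
      _ = V j * V r * ∑ k, g r k * ∑ a : Fin D → Fin (D + 1),
            eps ℝ (Matrix.vecCons j a) * eps ℝ (Matrix.vecCons k a) := by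
        simp_rw [det_mul_sum_eps_mul_prod_inv g hg, Finset.mul_sum]
        rw [Finset.sum_comm]
        exact Finset.sum_congr rfl fun k _ => Finset.sum_congr rfl fun a _ => by ring
      _ = D.factorial * (g j r * V j * V r) := by
        simp only [sum_eps_mul_eps, mul_ite, mul_zero, Finset.sum_ite_eq, Finset.mem_univ, if_true]
        rw [hsymm.apply j r]
        ring
  rw [Finset.mul_sum, Finset.mul_sum]
  refine Finset.sum_congr rfl fun j _ => ?_
  rw [Finset.mul_sum, Finset.mul_sum]
  exact Finset.sum_congr rfl fun r _ => h j r
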